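/- arXiv:math/0511730 — 2 statements merged into one kernel-verified Lean document; each statement's English description precedes it below -/
import Mathlib

section
/- Let ψ : Perm(Fin n) → T be the monoid homomorphism with ψ(s_i) = σ_i. If w, v ∈ Perm(Fin n) are such that w({1,2}) ∩ v({1,2}) ≠ ∅, then there exist permutations u, u' ∈ Perm(Fin n) such that ψ(w⁻¹)θ_1ψ(w) · ψ(v⁻¹)θ_1ψ(v) = ψ(u)·θ_1·ψ(u'). -/
/-!
The Brauer monoid presentation from Kudryavtseva–Mazorchuk,
"On presentations of Brauer-type monoids", Section 3.

Generators: `Sum.inl i` represents `σ_{i+1}` and `Sum.inr i` represents `θ_{i+1}`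
for `i : Fin (n-1)` (so the paper's indices `1, …, n-1` correspond to `i.val + 1`).
-/

/-- Generator type: `Sum.inl i` is `σ_{i+1}`, `Sum.inr i` is `θ_{i+1}`. -/
abbrev BrauerGen (n : ℕ) := Fin (n - 1) ⊕ Fin (n - 1)

/-- The word `σ_{i+1}` in the free monoid. -/
def fσ {n : ℕ} (i : Fin (n - 1)) : FreeMonoid (BrauerGen n) := FreeMonoid.of (Sum.inl i)

/-- The word `θ_{i+1}` in the free monoid. -/
def fθ {n : ℕ} (i : Fin (n - 1)) : FreeMonoid (BrauerGen n) := FreeMonoid.of (Sum.inr i)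

/-- The defining relations of the presentation of the Brauer monoid `𝔅_n`. -/
inductive BrauerRel (n : ℕ) : FreeMonoid (BrauerGen n) → FreeMonoid (BrauerGen n) → Prop
  | sigma_sq (i) : BrauerRel n (fσ i * fσ i) 1
  | sigma_comm (i j) (h : 1 < Nat.dist i.1 j.1) : BrauerRel n (fσ i * fσ j) (fσ j * fσ i)
  | braid (i j) (h : Nat.dist i.1 j.1 = 1) :
      BrauerRel n (fσ i * fσ j * fσ i) (fσ j * fσ i * fσ j)
  | theta_idem (i) : BrauerRel n (fθ i * fθ i) (fθ i)
  | theta_comm (i j) (h : 1 < Nat.dist i.1 j.1) : BrauerRel n (fθ i * fθ j) (fθ j * fθ i)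
  | theta_theta_theta (i j) (h : Nat.dist i.1 j.1 = 1) :
      BrauerRel n (fθ i * fθ j * fθ i) (fθ i)
  | theta_sigma (i) : BrauerRel n (fθ i * fσ i) (fθ i)
  | sigma_theta (i) : BrauerRel n (fσ i * fθ i) (fθ i)
  | theta_sigma_comm (i j) (h : 1 < Nat.dist i.1 j.1) :
      BrauerRel n (fθ i * fσ j) (fσ j * fθ i)
  | sigma_theta_theta (i j) (h : Nat.dist i.1 j.1 = 1) :
      BrauerRel n (fσ i * fθ j * fθ i) (fσ j * fθ i)
  | theta_theta_sigma (i j) (h : Nat.dist i.1 j.1 = 1) :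
      BrauerRel n (fθ i * fθ j * fσ i) (fθ i * fσ j)

/-- The monoid `T` given by the presentation above. -/
abbrev BrauerMonoid (n : ℕ) := PresentedMonoid (BrauerRel n)

/-- The generator `σ_{i+1}` of `T`. -/
def σB {n : ℕ} (i : Fin (n - 1)) : BrauerMonoid n := PresentedMonoid.of (BrauerRel n) (Sum.inl i)

/-- The generator `θ_{i+1}` of `T`. -/
def θB {n : ℕ} (i : Fin (n - 1)) : BrauerMonoid n := PresentedMonoid.of (BrauerRel n) (Sum.inr i)

/-- The point `i` of `{1, …, n}` (0-based: `i.val`). -/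
def lo {n : ℕ} (i : Fin (n - 1)) : Fin n := ⟨i.1, by have := i.2; omega⟩

/-- The point `i + 1` of `{1, …, n}` (0-based: `i.val + 1`). -/
def hi {n : ℕ} (i : Fin (n - 1)) : Fin n := ⟨i.1 + 1, by have := i.2; omega⟩

/-- The adjacent transposition `s_{i+1} = (i+1, i+2)` of the symmetric group on `{1, …, n}`. -/
def sPerm {n : ℕ} (i : Fin (n - 1)) : Equiv.Perm (Fin n) := Equiv.swap (lo i) (hi i)

theorem pf_a {n : ℕ} (hn : 3 ≤ n) : 0 < n - 1 := by omega

theorem pf_b {n : ℕ} (hn : 3 ≤ n) : 0 < n := by omega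

theorem pf_c {n : ℕ} (hn : 3 ≤ n) : 1 < n := by omega

theorem rel_eq {n : ℕ} {a b : FreeMonoid (BrauerGen n)} (h : BrauerRel n a b) :
    PresentedMonoid.mk (BrauerRel n) a = PresentedMonoid.mk (BrauerRel n) b :=
  PresentedMonoid.mk_eq_mk_of_rel h

theorem theta_sigma_theta {n : ℕ} (i j : Fin (n - 1)) (h : Nat.dist i.1 j.1 = 1) :
    (θB i * σB j * θB i : BrauerMonoid n) = θB i := by
  have h1 : (θB i * θB j * σB i : BrauerMonoid n) = θB i * σB j :=
    rel_eq (BrauerRel.theta_theta_sigma i j h)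
  have h2 : (σB i * θB i : BrauerMonoid n) = θB i := rel_eq (BrauerRel.sigma_theta i)
  have h3 : (θB i * θB j * θB i : BrauerMonoid n) = θB i :=
    rel_eq (BrauerRel.theta_theta_theta i j h)
  rw [← h1, mul_assoc, h2, h3]

theorem comm_swap {n : ℕ} (hn : 3 ≤ n)
    (ψ : Equiv.Perm (Fin n) →* BrauerMonoid n)
    (hψ : ∀ i : Fin (n - 1), ψ (sPerm i) = σB i) (a : ℕ) (ha : 2 ≤ a) (k : ℕ) :
    ∀ hk : a + k + 1 < n, Commute (θB ⟨0, pf_a hn⟩ : BrauerMonoid n)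
      (ψ (Equiv.swap ⟨a, by omega⟩ ⟨a + k + 1, hk⟩)) := by
  have base : ∀ (b : ℕ) (_ : 2 ≤ b) (hb : b + 1 < n),
      Commute (θB ⟨0, pf_a hn⟩ : BrauerMonoid n)
        (ψ (Equiv.swap ⟨b, by omega⟩ ⟨b + 1, hb⟩)) := by
    intro b h2 hb
    have := hψ ⟨b, by omega⟩
    simp only [sPerm, lo, hi] at this
    rw [this]
    exact rel_eq (BrauerRel.theta_sigma_comm _ _ (by simp [Nat.dist]; omega))
  induction k with
  | zero => intro hk; exact base a ha hk
  | succ k ih =>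
    intro hk
    have e : (Equiv.swap ⟨a, by omega⟩ ⟨a + (k + 1) + 1, hk⟩ : Equiv.Perm (Fin n)) =
        Equiv.swap ⟨a + k + 1, by omega⟩ ⟨a + k + 1 + 1, by omega⟩ *
        Equiv.swap ⟨a, by omega⟩ ⟨a + k + 1, by omega⟩ *
        Equiv.swap ⟨a + k + 1, by omega⟩ ⟨a + k + 1 + 1, by omega⟩ := by
      rw [Equiv.swap_mul_swap_mul_swap (by simp [Fin.ext_iff]; omega)
        (by simp [Fin.ext_iff]; omega), Equiv.swap_comm]
      rfl
    rw [e, map_mul, map_mul]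
    have b1 := base (a + k + 1) (by omega) (by omega)
    exact (b1.mul_right (ih (by omega))).mul_right b1

theorem comm_fix {n : ℕ} (hn : 3 ≤ n)
    (ψ : Equiv.Perm (Fin n) →* BrauerMonoid n)
    (hψ : ∀ i : Fin (n - 1), ψ (sPerm i) = σB i) (y : Equiv.Perm (Fin n))
    (h0 : y ⟨0, pf_b hn⟩ = ⟨0, pf_b hn⟩) (h1 : y ⟨1, pf_c hn⟩ = ⟨1, pf_c hn⟩) :
    Commute (θB ⟨0, pf_a hn⟩ : BrauerMonoid n) (ψ y) := by
  have key : ∀ z : Equiv.Perm {x : Fin n // 2 ≤ x.1},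
      Commute (θB ⟨0, pf_a hn⟩ : BrauerMonoid n) (ψ (Equiv.Perm.ofSubtype z)) := by
    intro z
    induction z using Equiv.Perm.swap_induction_on with
    | one => simp
    | swap_mul f x y hxy ih =>
      rw [map_mul, map_mul]
      refine Commute.mul_right ?_ ih
      rw [Equiv.Perm.ofSubtype_swap_eq]
      obtain ⟨⟨x, hx⟩, hx2⟩ := x
      obtain ⟨⟨y, hy⟩, hy2⟩ := y
      have hne : x ≠ y := by rintro rfl; exact hxy rfl
      simp only at hx2 hy2 ⊢
      rcases lt_or_gt_of_ne hne with h | h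
      · obtain ⟨k, rfl⟩ := Nat.exists_eq_add_of_lt h
        exact comm_swap hn ψ hψ x hx2 k hy
      · obtain ⟨k, rfl⟩ := Nat.exists_eq_add_of_lt h
        rw [Equiv.swap_comm]
        exact comm_swap hn ψ hψ y hy2 k hx
  have hlt : ∀ x : Fin n, x.1 < 2 → y x = x := by
    rintro ⟨x, hx⟩ h
    interval_cases x
    · exact h0
    · exact h1
  have hP : ∀ x : Fin n, 2 ≤ (y x).1 ↔ 2 ≤ x.1 := by
    intro x
    constructor
    · intro h
      by_contra hc
      rw [hlt x (by omega)] at h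
      exact hc h
    · intro h
      by_contra hc
      have := y.injective (hlt (y x) (by omega))
      rw [this] at hc
      exact hc h
  have := key (y.subtypePerm hP)
  rwa [Equiv.Perm.ofSubtype_subtypePerm] at this
  intro x hx
  by_contra hc
  exact hx (hlt x (by omega))

/-- Lemma `lemma204` of Kudryavtseva–Mazorchuk: if `w({1,2}) ∩ v({1,2}) ≠ ∅` then
`ψ(w⁻¹) θ_1 ψ(w) · ψ(v⁻¹) θ_1 ψ(v) = ψ(u) θ_1 ψ(u')` for some permutations `u, u'`.
(The symmetric group acts on `{1, …, n}` on the *right*, so `w({1,2})` is the image of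
`{1,2}` under `⇑w⁻¹` in terms of Mathlib's left-composition convention.) -/
theorem brauer_eps_product (n : ℕ) (hn : 3 ≤ n)
    (ψ : Equiv.Perm (Fin n) →* BrauerMonoid n)
    (hψ : ∀ i : Fin (n - 1), ψ (sPerm i) = σB i)
    (w v : Equiv.Perm (Fin n))
    (h : ⇑w⁻¹ '' ({⟨0, by omega⟩, ⟨1, by omega⟩} : Set (Fin n)) ∩
         ⇑v⁻¹ '' ({⟨0, by omega⟩, ⟨1, by omega⟩} : Set (Fin n)) ≠ ∅) :
    ∃ u u' : Equiv.Perm (Fin n),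
      (ψ w⁻¹ * θB ⟨0, by omega⟩ * ψ w) * (ψ v⁻¹ * θB ⟨0, by omega⟩ * ψ v) =
        ψ u * θB ⟨0, by omega⟩ * ψ u' := by
  
  have h01 : ∃ a b : Fin n, a.1 < 2 ∧ b.1 < 2 ∧ (w * v⁻¹) b = a := by
    obtain ⟨p, ⟨a, ha, hap⟩, ⟨b, hb, hbp⟩⟩ := Set.nonempty_iff_ne_empty.mpr h
    refine ⟨a, b, ?_, ?_, ?_⟩
    · rcases ha with rfl | rfl <;> simp
    · rcases hb with rfl | rfl <;> simp
    · rw [Equiv.Perm.mul_apply, hbp, ← hap]; simp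
  obtain ⟨a, b, ha, hb, hab⟩ := h01
  set z : Fin n := ⟨0, by omega⟩ with hz
  set o : Fin n := ⟨1, by omega⟩ with ho
  set t : Fin n := ⟨2, by omega⟩ with ht
  have hzo : z ≠ o := by simp [hz, ho]
  have hzt : z ≠ t := by simp [hz, ht]
  have hot : o ≠ t := by simp [ho, ht]
  have hs0 : ψ (Equiv.swap z o) = σB ⟨0, by omega⟩ := hψ ⟨0, by omega⟩
  have hs1 : ψ (Equiv.swap o t) = σB ⟨1, by omega⟩ := hψ ⟨1, by omega⟩
  have main : ∀ y : Equiv.Perm (Fin n), y z = z → ∃ u : Equiv.Perm (Fin n),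
      (θB ⟨0, by omega⟩ * ψ y * θB ⟨0, by omega⟩ : BrauerMonoid n) = ψ u * θB ⟨0, by omega⟩ := by
    intro y hy
    have idem : (θB ⟨0, by omega⟩ * θB ⟨0, by omega⟩ : BrauerMonoid n) = θB ⟨0, by omega⟩ :=
      rel_eq (BrauerRel.theta_idem _)
    by_cases hc : y o = o
    · refine ⟨y, ?_⟩
      rw [(comm_fix hn ψ hψ y hy hc).eq, mul_assoc, idem]
    · have hcz : y o ≠ z := fun e => hzo (y.injective (hy.trans e.symm))
      have c1 := comm_fix hn ψ hψ (Equiv.swap t (y o))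
        (Equiv.swap_apply_of_ne_of_ne hzt hcz.symm)
        (Equiv.swap_apply_of_ne_of_ne hot (Ne.symm hc))
      have c2 := comm_fix hn ψ hψ (Equiv.swap o t * (Equiv.swap t (y o) * y))
        (by
          change Equiv.swap o t (Equiv.swap t (y o) (y z)) = z
          rw [hy, Equiv.swap_apply_of_ne_of_ne hzt hcz.symm,
            Equiv.swap_apply_of_ne_of_ne hzo hzt])
        (by
          change Equiv.swap o t (Equiv.swap t (y o) (y o)) = o
          rw [Equiv.swap_apply_right, Equiv.swap_apply_right])
      set p := Equiv.swap t (y o) with hp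
      set q := Equiv.swap o t * (p * y) with hq
      have hyq : y = p * (Equiv.swap o t * q) := by
        rw [hq, hp, Equiv.swap_mul_self_mul, Equiv.swap_mul_self_mul]
      have tst := theta_sigma_theta (n := n) ⟨0, by omega⟩ ⟨1, by omega⟩ (by simp [Nat.dist])
      refine ⟨p * q, ?_⟩
      calc (θB ⟨0, by omega⟩ * ψ y * θB ⟨0, by omega⟩ : BrauerMonoid n)
          = (θB ⟨0, by omega⟩ * ψ p) * σB ⟨1, by omega⟩ * (ψ q * θB ⟨0, by omega⟩) := by
            rw [hyq, map_mul, map_mul, hs1]; simp only [mul_assoc]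
        _ = ψ p * (θB ⟨0, by omega⟩ * σB ⟨1, by omega⟩ * θB ⟨0, by omega⟩) * ψ q := by
            rw [c1.eq, ← c2.eq]; simp only [mul_assoc]
        _ = ψ (p * q) * θB ⟨0, by omega⟩ := by
            rw [tst, map_mul ψ p q, mul_assoc, mul_assoc, c2.eq]
  have absl : ∀ c : Fin n, c.1 < 2 →
      (θB ⟨0, by omega⟩ * ψ (Equiv.swap z c) : BrauerMonoid n) = θB ⟨0, by omega⟩ := by
    rintro ⟨c, hc⟩ h
    interval_cases c
    · rw [← hz, Equiv.swap_self]
      exact (congrArg _ (map_one ψ)).trans (mul_one _)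
    · rw [← ho, hs0]; exact rel_eq (BrauerRel.theta_sigma _)
  have absr : ∀ c : Fin n, c.1 < 2 →
      (ψ (Equiv.swap z c) * θB ⟨0, by omega⟩ : BrauerMonoid n) = θB ⟨0, by omega⟩ := by
    rintro ⟨c, hc⟩ h
    interval_cases c
    · rw [← hz, Equiv.swap_self]
      exact (congrArg (· * _) (map_one ψ)).trans (one_mul _)
    · rw [← ho, hs0]; exact rel_eq (BrauerRel.sigma_theta _)
  obtain ⟨u, hu⟩ := main (Equiv.swap z a * (w * v⁻¹) * Equiv.swap z b) (by
    change Equiv.swap z a ((w * v⁻¹) (Equiv.swap z b z)) = z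
    rw [Equiv.swap_apply_left, hab, Equiv.swap_apply_right])
  refine ⟨w⁻¹ * u, v, ?_⟩
  have hx : (θB ⟨0, by omega⟩ * ψ (Equiv.swap z a * (w * v⁻¹) * Equiv.swap z b)
      * θB ⟨0, by omega⟩ : BrauerMonoid n) = θB ⟨0, by omega⟩ * (ψ w * ψ v⁻¹) * θB ⟨0, by omega⟩ := by
    rw [map_mul, map_mul, map_mul]
    calc _ = (θB ⟨0, by omega⟩ * ψ (Equiv.swap z a)) * (ψ w * ψ v⁻¹) *
          (ψ (Equiv.swap z b) * θB ⟨0, by omega⟩) := by simp only [mul_assoc]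
      _ = _ := by rw [absl a ha, absr b hb]
  rw [hx] at hu
  calc _ = ψ w⁻¹ * (θB ⟨0, by omega⟩ * (ψ w * ψ v⁻¹) * θB ⟨0, by omega⟩) * ψ v := by
        simp only [mul_assoc]
    _ = _ := by rw [hu, map_mul]; simp only [mul_assoc]
end

section
/- Let ψ : Perm(Fin n) → T be the monoid homomorphism with ψ(s_i) = σ_i, and for 0 ≤ k ≤ ⌊n/2⌋ let δ_k = θ_1θ_3⋯θ_{2k−1} (with δ_0 = 1). Then the set { ψ(w)·δ_k·ψ(v) : w, v ∈ Perm(Fin n) } has at most (n!)² / (2^{2k}·(k!)²·(n−2k)!) elements (this quotient is an exact natural-number division). -/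
/-- The canonical element `δ_k = θ_1 θ_3 ⋯ θ_{2k-1}` of `T` (with `δ_0 = 1`),
for `0 ≤ k ≤ ⌊n/2⌋`. -/
def δB (n : ℕ) (k : ℕ) (hk : k ≤ n / 2) : BrauerMonoid n :=
  (List.ofFn fun j : Fin k => θB (n := n) ⟨2 * j.1, by have := j.2; omega⟩).prod


section BrauerHelpers

variable {n : ℕ}

theorem brauer_mk_eq {a b : FreeMonoid (BrauerGen n)} (h : BrauerRel n a b) :
    PresentedMonoid.mk (BrauerRel n) a = PresentedMonoid.mk (BrauerRel n) b :=
  (Con.eq _).2 (ConGen.Rel.of _ _ h)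

theorem σσ (i : Fin (n-1)) : (σB i * σB i : BrauerMonoid n) = 1 := brauer_mk_eq (.sigma_sq i)
theorem σcomm (i j : Fin (n-1)) (h : 1 < Nat.dist i.1 j.1) :
    (σB i * σB j : BrauerMonoid n) = σB j * σB i := brauer_mk_eq (.sigma_comm i j h)
theorem θθ (i : Fin (n-1)) : (θB i * θB i : BrauerMonoid n) = θB i := brauer_mk_eq (.theta_idem i)
theorem θcomm (i j : Fin (n-1)) (h : 1 < Nat.dist i.1 j.1) :
    (θB i * θB j : BrauerMonoid n) = θB j * θB i := brauer_mk_eq (.theta_comm i j h)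
theorem θσ (i : Fin (n-1)) : (θB i * σB i : BrauerMonoid n) = θB i := brauer_mk_eq (.theta_sigma i)
theorem σθ (i : Fin (n-1)) : (σB i * θB i : BrauerMonoid n) = θB i := brauer_mk_eq (.sigma_theta i)
theorem θσcomm (i j : Fin (n-1)) (h : 1 < Nat.dist i.1 j.1) :
    (θB i * σB j : BrauerMonoid n) = σB j * θB i := brauer_mk_eq (.theta_sigma_comm i j h)
theorem σθθ (i j : Fin (n-1)) (h : Nat.dist i.1 j.1 = 1) :
    (σB i * θB j * θB i : BrauerMonoid n) = σB j * θB i := brauer_mk_eq (.sigma_theta_theta i j h)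
theorem θθσ (i j : Fin (n-1)) (h : Nat.dist i.1 j.1 = 1) :
    (θB i * θB j * σB i : BrauerMonoid n) = θB i * σB j := brauer_mk_eq (.theta_theta_sigma i j h)

theorem pair_left (a b c : Fin (n-1)) (hab : Nat.dist a.1 b.1 = 1) (hcb : Nat.dist c.1 b.1 = 1)
    (hac : 1 < Nat.dist a.1 c.1) :
    (σB b * σB a * σB c * σB b * (θB a * θB c) : BrauerMonoid n) = θB a * θB c := by
  calc (σB b * σB a * σB c * σB b * (θB a * θB c) : BrauerMonoid n)
      = σB b * (σB a * σB c) * (σB b * θB a) * θB c := by simp only [mul_assoc]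
    _ = σB b * (σB c * σB a) * (σB a * θB b * θB a) * θB c := by
        rw [σcomm a c hac, σθθ a b hab]
    _ = σB b * σB c * (σB a * σB a) * θB b * (θB a * θB c) := by simp only [mul_assoc]
    _ = σB b * (σB c * θB b * θB c) * θB a := by
        rw [σσ, θcomm a c hac]; simp only [mul_assoc, one_mul]
    _ = (σB b * σB b) * (θB c * θB a) := by rw [σθθ c b hcb]; simp only [mul_assoc]
    _ = θB a * θB c := by rw [σσ, one_mul, θcomm a c hac]

theorem pair_right (a b c : Fin (n-1)) (hab : Nat.dist a.1 b.1 = 1) (hcb : Nat.dist c.1 b.1 = 1)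
    (hac : 1 < Nat.dist a.1 c.1) :
    ((θB a * θB c) * (σB b * σB a * σB c * σB b) : BrauerMonoid n) = θB a * θB c := by
  calc ((θB a * θB c) * (σB b * σB a * σB c * σB b) : BrauerMonoid n)
      = θB a * (θB c * σB b) * (σB a * σB c) * σB b := by simp only [mul_assoc]
    _ = θB a * (θB c * θB b * σB c) * (σB c * σB a) * σB b := by
        rw [σcomm a c hac, θθσ c b hcb]
    _ = (θB a * θB c) * θB b * (σB c * σB c) * σB a * σB b := by simp only [mul_assoc]
    _ = θB c * (θB a * θB b * σB a) * σB b := by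
        rw [σσ, θcomm a c hac]; simp only [mul_assoc, one_mul]
    _ = (θB c * θB a) * (σB b * σB b) := by rw [θθσ a b hab]; simp only [mul_assoc]
    _ = θB a * θB c := by rw [σσ, mul_one, θcomm a c hac]

theorem list_absorb {M : Type*} [Monoid M] (l : List M) (x : M) (hx : x ∈ l) (h2 : x * x = x)
    (hc : ∀ y ∈ l, Commute x y) : x * l.prod = l.prod := by
  induction l with
  | nil => simp at hx
  | cons a l ih =>
    rw [List.prod_cons]
    rcases List.mem_cons.1 hx with rfl | h
    · rw [← mul_assoc, h2]
    · rw [← mul_assoc, (hc a (by simp)).eq, mul_assoc, ih h (fun y hy => hc y (by simp [hy]))]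

variable {k : ℕ} (hk : k ≤ n / 2)

/-- index of the j-th theta -/
def tI (j : Fin k) : Fin (n-1) := ⟨2 * j.1, by have := j.2; omega⟩

include hk in
theorem δcomm (x : BrauerMonoid n) (h : ∀ j : Fin k, Commute x (θB (tI hk j))) :
    Commute x (δB n k hk) := by
  apply Commute.list_prod_right
  intro y hy
  obtain ⟨j, rfl⟩ := (List.mem_ofFn' _ _).1 hy
  exact h j

theorem tI_comm (i j : Fin k) : Commute (θB (tI hk i) : BrauerMonoid n) (θB (tI hk j)) := by
  by_cases h : i = j
  · subst h; exact Commute.refl _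
  · apply θcomm
    have : i.1 ≠ j.1 := fun h' => h (Fin.ext h')
    simp only [tI, Nat.dist]; omega

theorem θδ (j : Fin k) : θB (tI hk j) * δB n k hk = δB n k hk := by
  apply list_absorb
  · exact (List.mem_ofFn' _ _).2 ⟨j, rfl⟩
  · exact θθ _
  · intro y hy
    obtain ⟨i, rfl⟩ := (List.mem_ofFn' _ _).1 hy
    exact tI_comm hk j i

theorem δθ (j : Fin k) : δB n k hk * θB (tI hk j) = δB n k hk := by
  rw [← (δcomm hk _ (tI_comm hk j)).eq, θδ]

/-- coordinates -/
def bFun : (Fin k × Bool) ⊕ Fin (n - 2 * k) → Fin n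
  | .inl (j, b) => ⟨2 * j.1 + b.toNat, by have := j.2; have := Bool.toNat_le b; omega⟩
  | .inr i => ⟨2 * k + i.1, by have := i.2; omega⟩

theorem bFun_bij : Function.Bijective (bFun hk) := by
  rw [Fintype.bijective_iff_injective_and_card]
  constructor
  · rintro (⟨j, b⟩ | i) (⟨j', b'⟩ | i') h <;> simp only [bFun, Fin.mk.injEq] at h
    · cases b <;> cases b' <;> simp at h ⊢ <;> omega
    · have := j.2; have := Bool.toNat_le b; omega
    · have := j'.2; have := Bool.toNat_le b'; omega
    · congr 1; omega
  · simp; omega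

/-- coordinates as an equivalence -/
noncomputable def bE : (Fin k × Bool) ⊕ Fin (n - 2 * k) ≃ Fin n :=
  Equiv.ofBijective _ (bFun_bij hk)

/-- permuting pairs -/
def pHom : Equiv.Perm (Fin k) →* Equiv.Perm (Fin k × Bool) where
  toFun π := Equiv.prodCongr π 1
  map_one' := rfl
  map_mul' _ _ := rfl

/-- flipping inside pairs -/
def fHom : (Fin k → Equiv.Perm Bool) →* Equiv.Perm (Fin k × Bool) where
  toFun ε := Equiv.prodCongrRight ε
  map_one' := rfl
  map_mul' _ _ := rfl

theorem pHom_apply (π : Equiv.Perm (Fin k)) (j : Fin k) (b : Bool) : pHom π (j, b) = (π j, b) := rfl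

theorem fHom_apply (ε : Fin k → Equiv.Perm Bool) (j : Fin k) (b : Bool) :
    fHom ε (j, b) = (j, ε j b) := rfl

/-- embedding -/
noncomputable def emb : Equiv.Perm (Fin k × Bool) × Equiv.Perm (Fin (n - 2 * k)) →*
    Equiv.Perm (Fin n) :=
  (Equiv.permCongrHom (bE hk)).toMonoidHom.comp (Equiv.Perm.sumCongrHom _ _)

theorem emb_inj : Function.Injective (emb hk) :=
  (Equiv.permCongrHom (bE hk)).injective.comp Equiv.Perm.sumCongrHom_injective

theorem emb_apply_eq (p : Equiv.Perm (Fin k × Bool) × Equiv.Perm (Fin (n - 2 * k)))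
    (q : Equiv.Perm (Fin n))
    (h1 : ∀ j b, bE hk (.inl (p.1 (j, b))) = q (bE hk (.inl (j, b))))
    (h2 : ∀ i, bE hk (.inr (p.2 i)) = q (bE hk (.inr i))) : emb hk p = q := by
  ext1 x
  obtain ⟨y, rfl⟩ := (bE hk).surjective x
  rcases y with ⟨j, b⟩ | i
  · rw [← h1]; simp [emb, Equiv.permCongrHom]
  · rw [← h2]; simp [emb, Equiv.permCongrHom]

theorem bE_inl (j : Fin k) (b : Bool) : (bE hk (.inl (j, b))).1 = 2 * j.1 + b.toNat := rfl
theorem bE_inr (i : Fin (n - 2 * k)) : (bE hk (.inr i)).1 = 2 * k + i.1 := rfl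

theorem sPerm_val (i : Fin (n-1)) (x : Fin n) :
    (sPerm i x).1 = if x.1 = i.1 then i.1 + 1 else if x.1 = i.1 + 1 then i.1 else x.1 := by
  simp only [sPerm, Equiv.swap_apply_def, lo, hi, Fin.ext_iff]
  split_ifs <;> simp_all

theorem emb_flip (j : Fin k) :
    emb hk (fHom (Pi.mulSingle j (Equiv.swap false true)), 1) = sPerm (tI hk j) := by
  apply emb_apply_eq
  · intro i b
    apply Fin.ext
    rw [sPerm_val]
    by_cases h : i = j
    · subst h
      cases b <;> simp [fHom_apply, bE_inl, tI]
    · have : i.1 ≠ j.1 := fun h' => h (Fin.ext h')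
      have hb := Bool.toNat_le b
      simp only [fHom_apply, bE_inl, tI, Pi.mulSingle_eq_of_ne h, Equiv.Perm.one_apply]
      grind
  · intro i
    apply Fin.ext
    rw [sPerm_val]
    have := j.2
    simp only [bE_inr, tI, Equiv.Perm.one_apply]
    grind

theorem emb_pair (j j' : Fin k) (hj : j'.1 = j.1 + 1) (m : Fin (n-1)) (hm : m.1 = 2 * j.1 + 1) :
    emb hk (pHom (Equiv.swap j j'), 1) =
      sPerm m * sPerm (tI hk j) * sPerm (tI hk j') * sPerm m := by
  apply emb_apply_eq
  · intro i b
    apply Fin.ext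
    simp only [Equiv.Perm.mul_apply, sPerm_val, pHom_apply, bE_inl, tI, hm, hj,
      Equiv.swap_apply_def, Fin.ext_iff]
    have hb := Bool.toNat_le b
    rcases lt_trichotomy i.1 j.1 with h | h | h
    · grind
    · grind
    · by_cases h' : i.1 = j.1 + 1 <;> grind
  · intro i
    apply Fin.ext
    have := j'.2
    simp only [Equiv.Perm.mul_apply, sPerm_val, Equiv.Perm.one_apply, bE_inr, tI, hm]
    grind

theorem emb_tail (a b : Fin (n - 2 * k)) (hab : b.1 = a.1 + 1) (m : Fin (n-1))
    (hm : m.1 = 2 * k + a.1) :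
    emb hk (1, Equiv.swap a b) = sPerm m := by
  apply emb_apply_eq
  · intro i c
    apply Fin.ext
    have := i.2
    have := Bool.toNat_le c
    simp only [sPerm_val, Equiv.Perm.one_apply, bE_inl, hm]
    grind
  · intro i
    apply Fin.ext
    simp only [sPerm_val, bE_inr, hm, Equiv.swap_apply_def, Fin.ext_iff]
    grind

theorem perm_adj_mem {m : ℕ} (S : Submonoid (Equiv.Perm (Fin m)))
    (h : ∀ a b : Fin m, b.1 = a.1 + 1 → Equiv.swap a b ∈ S) (x : Equiv.Perm (Fin m)) : x ∈ S := by
  cases m with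
  | zero => rw [Subsingleton.elim x 1]; exact S.one_mem
  | succ m =>
    have : (⊤ : Submonoid (Equiv.Perm (Fin (m+1)))) ≤ S := by
      rw [← Equiv.Perm.mclosure_swap_castSucc_succ, Submonoid.closure_le]
      rintro _ ⟨i, rfl⟩
      exact h _ _ (by simp)
    exact this (Submonoid.mem_top x)

variable (ψ : Equiv.Perm (Fin n) →* BrauerMonoid n)

/-- left and right fixing subgroup -/
def fixS : Subgroup (Equiv.Perm (Fin n)) where
  carrier := {w | ψ w * δB n k hk = δB n k hk ∧ δB n k hk * ψ w = δB n k hk}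
  one_mem' := by simp
  mul_mem' := by
    rintro a b ⟨h1, h2⟩ ⟨h3, h4⟩
    constructor
    · rw [map_mul, mul_assoc, h3, h1]
    · rw [map_mul, ← mul_assoc, h2, h4]
  inv_mem' := by
    rintro a ⟨h1, h2⟩
    constructor
    · nth_rw 1 [← h1]; rw [← mul_assoc, ← map_mul]; simp
    · nth_rw 1 [← h2]; rw [mul_assoc, ← map_mul]; simp

variable (hψ : ∀ i : Fin (n - 1), ψ (sPerm i) = σB i)

include hψ in
theorem flip_mem (ε : Fin k → Equiv.Perm Bool) : emb hk (fHom ε, 1) ∈ fixS hk ψ := by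
  have := Subgroup.pi_mem_of_mulSingle_mem
    (H := (fixS hk ψ).comap ((emb hk).comp ((MonoidHom.inl _ _).comp fHom))) ε ?_
  · exact this
  · intro j
    have hε : ε j = 1 ∨ ε j = Equiv.swap false true := by
      generalize ε j = e; revert e; decide
    rcases hε with h | h
    · rw [h, Pi.mulSingle_one]; exact one_mem _
    · rw [h]
      change emb hk (fHom (Pi.mulSingle j (Equiv.swap false true)), 1) ∈ fixS hk ψ
      rw [emb_flip]
      constructor
      · rw [hψ, ← θδ hk j, ← mul_assoc, σθ]
      · rw [hψ, ← δθ hk j, mul_assoc, θσ]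

include hψ in
theorem pair_mem (π : Equiv.Perm (Fin k)) : emb hk (pHom π, 1) ∈ fixS hk ψ := by
  refine perm_adj_mem
    ((fixS hk ψ).comap ((emb hk).comp ((MonoidHom.inl _ _).comp pHom))).toSubmonoid ?_ π
  intro j j' hj
  change emb hk (pHom (Equiv.swap j j'), 1) ∈ fixS hk ψ
  have := j'.2
  let m : Fin (n-1) := ⟨2 * j.1 + 1, by omega⟩
  rw [emb_pair hk j j' hj m rfl]
  have h1 : Nat.dist (tI hk j).1 m.1 = 1 := by simp only [tI, m, Nat.dist]; omega
  have h2 : Nat.dist (tI hk j').1 m.1 = 1 := by simp only [tI, m, Nat.dist]; omega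
  have h3 : 1 < Nat.dist (tI hk j).1 (tI hk j').1 := by simp only [tI, Nat.dist]; omega
  constructor
  · simp only [map_mul, hψ]
    conv_lhs => rw [← θδ hk j, ← θδ hk j', ← mul_assoc (θB (tI hk j)), ← mul_assoc,
      pair_left _ _ _ h1 h2 h3, mul_assoc, θδ, θδ]
  · simp only [map_mul, hψ]
    conv_lhs => rw [← δθ hk j', ← δθ hk j, mul_assoc _ (θB (tI hk j)), mul_assoc (δB n k hk),
      pair_right _ _ _ h1 h2 h3, ← mul_assoc, δθ, δθ]

include hψ in
theorem tail_comm (α : Equiv.Perm (Fin (n - 2 * k))) :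
    Commute (ψ (emb hk (1, α))) (δB n k hk) := by
  have := perm_adj_mem
    ((Submonoid.centralizer {δB n k hk}).comap
      (ψ.comp ((emb hk).comp (MonoidHom.inr _ _)))) ?_ α
  · exact ((Submonoid.mem_centralizer_iff.1 this) _ rfl).symm
  · intro a b hab
    apply Submonoid.mem_centralizer_iff.2
    rintro _ rfl
    change _ * ψ (emb hk (1, Equiv.swap a b)) = ψ (emb hk (1, Equiv.swap a b)) * _
    rw [emb_tail hk a b hab ⟨2 * k + a.1, by have := b.2; omega⟩ rfl, hψ]
    refine (δcomm hk _ fun j => ?_).eq.symm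
    refine (θσcomm _ _ ?_).symm
    have := j.2
    simp only [tI, Nat.dist]; omega

/-- two-sided action -/
@[reducible] def bAct : MulAction (Equiv.Perm (Fin n) × Equiv.Perm (Fin n)) (BrauerMonoid n) where
  smul p x := ψ p.1 * x * ψ p.2⁻¹
  one_smul x := by change ψ 1 * x * ψ 1⁻¹ = x; simp
  mul_smul p q x := by
    change ψ (p.1 * q.1) * x * ψ (p.2 * q.2)⁻¹ = ψ p.1 * (ψ q.1 * x * ψ q.2⁻¹) * ψ p.2⁻¹
    simp [mul_assoc]

theorem fHom_pHom_inj (π π' : Equiv.Perm (Fin k)) (ε ε' : Fin k → Equiv.Perm Bool)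
    (h : pHom π * fHom ε = pHom π' * fHom ε') : π = π' ∧ ε = ε' := by
  have h' : ∀ j b, (π j, ε j b) = (π' j, ε' j b) := fun j b => congrArg (fun e => e (j, b)) h
  constructor
  · ext1 j; exact (Prod.ext_iff.1 (h' j true)).1
  · funext j; ext1 b; exact (Prod.ext_iff.1 (h' j b)).2

end BrauerHelpers

/-- Lemma `lemma222` of Kudryavtseva–Mazorchuk: the `S_n × S_n`-orbit
`{ψ(w) δ_k ψ(v) : w, v ∈ S_n}` of the canonical element `δ_k` contains at most
`(n!)² / (2^{2k} (k!)² (n-2k)!)` elements. -/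
theorem brauer_orbit_card_le (n : ℕ) (hn : 1 ≤ n) (k : ℕ) (hk : k ≤ n / 2)
    (ψ : Equiv.Perm (Fin n) →* BrauerMonoid n)
    (hψ : ∀ i : Fin (n - 1), ψ (sPerm i) = σB i) :
    Set.ncard {x : BrauerMonoid n |
        ∃ w v : Equiv.Perm (Fin n), x = ψ w * δB n k hk * ψ v} ≤
      n.factorial ^ 2 / (2 ^ (2 * k) * k.factorial ^ 2 * (n - 2 * k).factorial) := by
  let _ := bAct ψ
  let G := Equiv.Perm (Fin n) × Equiv.Perm (Fin n)
  have horb : {x : BrauerMonoid n | ∃ w v : Equiv.Perm (Fin n), x = ψ w * δB n k hk * ψ v} =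
      MulAction.orbit G (δB n k hk) := by
    ext x
    constructor
    · rintro ⟨w, v, rfl⟩
      refine ⟨(w, v⁻¹), ?_⟩
      change ψ w * δB n k hk * ψ (v⁻¹)⁻¹ = _
      rw [inv_inv]
    · rintro ⟨⟨w, v⟩, rfl⟩
      exact ⟨w, v⁻¹, rfl⟩
  rw [horb]
  let D := (Equiv.Perm (Fin k) × (Fin k → Equiv.Perm Bool)) ×
    (Equiv.Perm (Fin k) × (Fin k → Equiv.Perm Bool)) × Equiv.Perm (Fin (n - 2 * k))
  have hfix : ∀ π ε, emb hk (pHom π * fHom ε, 1) ∈ fixS hk ψ := by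
    intro π ε
    have := mul_mem (pair_mem hk ψ hψ π) (flip_mem hk ψ hψ ε)
    rwa [← map_mul, Prod.mk_mul_mk, mul_one] at this
  have hst : ∀ d : D, ((emb hk (pHom d.1.1 * fHom d.1.2, d.2.2),
      emb hk (pHom d.2.1.1 * fHom d.2.1.2, d.2.2)) : G) ∈
      MulAction.stabilizer G (δB n k hk) := by
    rintro ⟨⟨π, ε⟩, ⟨π', ε'⟩, α⟩
    rw [MulAction.mem_stabilizer_iff]
    change ψ (emb hk (pHom π * fHom ε, α)) * δB n k hk * ψ (emb hk (pHom π' * fHom ε', α))⁻¹ = _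
    have e1 : ((pHom π * fHom ε, α) : _ × Equiv.Perm (Fin (n - 2 * k))) =
      (1, α) * (pHom π * fHom ε, 1) := by simp
    have e2 : ((pHom π' * fHom ε', α) : _ × Equiv.Perm (Fin (n - 2 * k))) =
      (pHom π' * fHom ε', 1) * (1, α) := by simp
    rw [e1, e2, map_mul, map_mul, map_mul, mul_assoc (ψ _), (hfix π ε).1,
      (tail_comm hk ψ hψ α).eq, mul_inv_rev, map_mul, mul_assoc, ← mul_assoc (ψ _), ← map_mul,
      mul_inv_cancel, map_one, one_mul]
    exact ((fixS hk ψ).inv_mem (hfix π' ε')).2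
  have hcard : Nat.card D ≤ Nat.card (MulAction.stabilizer G (δB n k hk)) := by
    refine Nat.card_le_card_of_injective (fun d => ⟨_, hst d⟩) ?_
    rintro ⟨⟨π, ε⟩, ⟨π', ε'⟩, α⟩ ⟨⟨π₁, ε₁⟩, ⟨π₁', ε₁'⟩, α₁⟩ h
    have h0 := Prod.ext_iff.1 (Subtype.ext_iff.1 h)
    have h1 := Prod.ext_iff.1 (emb_inj hk h0.1)
    have h2 := Prod.ext_iff.1 (emb_inj hk h0.2)
    obtain ⟨rfl, rfl⟩ := fHom_pHom_inj _ _ _ _ h1.1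
    obtain ⟨rfl, rfl⟩ := fHom_pHom_inj _ _ _ _ h2.1
    obtain rfl : α = α₁ := h1.2
    rfl
  have hD : Nat.card D = 2 ^ (2 * k) * k.factorial ^ 2 * (n - 2 * k).factorial := by
    have h2 : Nat.card (Fin k → Equiv.Perm Bool) = 2 ^ k := by
      rw [Nat.card_fun, Nat.card_perm]; simp
    simp only [D, Nat.card_prod, Nat.card_perm, Nat.card_fin, h2]
    ring
  have hG : Nat.card G = n.factorial ^ 2 := by
    simp only [G, Nat.card_prod, Nat.card_perm, Nat.card_fin, sq]
  have hos : (MulAction.orbit G (δB n k hk)).ncard *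
      Nat.card (MulAction.stabilizer G (δB n k hk)) = Nat.card G := by
    rw [← MulAction.index_stabilizer, mul_comm, Subgroup.card_mul_index]
  rw [Nat.le_div_iff_mul_le (by positivity), ← hD, ← hG, ← hos]
  exact Nat.mul_le_mul_left _ hcard
end
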